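/- arXiv:0810.1779 — 5 statements merged into one kernel-verified Lean document; each statement's English description precedes it below -/
import Mathlib

section
/- Let K ⊆ ℝⁿ be an open convex symmetric cone containing K_n^+, and let f : K → ℝ be C¹ with ∂f/∂λ_i > 0 on K for every i and f(1,…,1) = 1. Let Ω ⊆ ℝⁿ be a bounded domain and σ > 0 a constant. Suppose u ∈ C²(Ω) ∩ C⁰(Ω̄) satisfies u > 0 in Ω, u = 0 on ∂Ω, and for all x ∈ Ω the hyperbolic principal curvature vector κ[u](x) lies in K and f(κ[u](x)) = σ. Then σ < 1. -/
open scoped BigOperators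
open Set

noncomputable section

abbrev Euc (n : ℕ) := EuclideanSpace ℝ (Fin n)

/-- First partial derivative (within a set `s`). -/
def pd1 {n : ℕ} (s : Set (Euc n)) (u : Euc n → ℝ) (x : Euc n) (i : Fin n) : ℝ :=
  fderivWithin ℝ u s x (EuclideanSpace.single i 1)

/-- Second partial derivative (within a set `s`). -/
def pd2 {n : ℕ} (s : Set (Euc n)) (u : Euc n → ℝ) (x : Euc n) (i j : Fin n) : ℝ :=
  fderivWithin ℝ (fun y => pd1 s u y i) s x (EuclideanSpace.single j 1)

/-- w = √(1+|Du|²). -/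
def wgt {n : ℕ} (s : Set (Euc n)) (u : Euc n → ℝ) (x : Euc n) : ℝ :=
  Real.sqrt (1 + ∑ i, (pd1 s u x i) ^ 2)

/-- γ^{ij} = δ_{ij} − u_i u_j/(w(1+w)). -/
def gmat {n : ℕ} (s : Set (Euc n)) (u : Euc n → ℝ) (x : Euc n) : Matrix (Fin n) (Fin n) ℝ :=
  Matrix.of fun i j =>
    (if i = j then (1:ℝ) else 0) - pd1 s u x i * pd1 s u x j / (wgt s u x * (1 + wgt s u x))

/-- The matrix A[u](x) whose eigenvalues are the hyperbolic principal curvatures. -/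
def hypA {n : ℕ} (s : Set (Euc n)) (u : Euc n → ℝ) (x : Euc n) : Matrix (Fin n) (Fin n) ℝ :=
  Matrix.of fun i j =>
    (1 / wgt s u x) * ((if i = j then (1:ℝ) else 0)
      + u x * ∑ k, ∑ l, gmat s u x i k * pd2 s u x k l * gmat s u x l j)

/-- κ is the list of eigenvalues of A, counted with multiplicity. -/
def IsEigenvalues {n : ℕ} (A : Matrix (Fin n) (Fin n) ℝ) (κ : Fin n → ℝ) : Prop :=
  A.charpoly = ∏ i, (Polynomial.X - Polynomial.C (κ i))

/-- The largest eigenvalue of a matrix. -/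
def maxEigen {n : ℕ} (A : Matrix (Fin n) (Fin n) ℝ) : ℝ :=
  sSup {t : ℝ | A.charpoly.IsRoot t}

/-- u is admissible on Ω: u > 0 and δ_{ij} + u_i u_j + u u_{ij} is positive definite. -/
def Admissible {n : ℕ} (s Ω : Set (Euc n)) (u : Euc n → ℝ) : Prop :=
  ∀ x ∈ Ω, 0 < u x ∧
    (Matrix.of fun i j =>
      (if i = j then (1:ℝ) else 0) + pd1 s u x i * pd1 s u x j + u x * pd2 s u x i j).PosDef

/-- |D²u| : largest absolute value of a second partial derivative. -/
def hessAbs {n : ℕ} (s : Set (Euc n)) (u : Euc n → ℝ) (x : Euc n) : ℝ :=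
  ⨆ i : Fin n, ⨆ j : Fin n, |pd2 s u x i j|

/-- The positive cone K_n^+. -/
def Kpos (n : ℕ) : Set (Fin n → ℝ) := {p | ∀ i, 0 < p i}

/-- An open convex symmetric cone containing K_n^+. -/
def IsSymmCone {n : ℕ} (K : Set (Fin n → ℝ)) : Prop :=
  IsOpen K ∧ Convex ℝ K ∧ (∀ p ∈ K, ∀ t : ℝ, 0 < t → t • p ∈ K) ∧
    (∀ p ∈ K, ∀ g : Equiv.Perm (Fin n), (p ∘ g) ∈ K) ∧ Kpos n ⊆ K

/-- The structure conditions on the curvature function f (with K = K_n^+). -/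
def StructureConds (n : ℕ) (f : (Fin n → ℝ) → ℝ) : Prop :=
  ContDiffOn ℝ (⊤ : ℕ∞) f (Kpos n) ∧
  (∀ p ∈ Kpos n, ∀ g : Equiv.Perm (Fin n), f (p ∘ g) = f p) ∧
  (∀ p ∈ Kpos n, ∀ i, 0 < fderiv ℝ f p (Pi.single i 1)) ∧
  ConcaveOn ℝ (Kpos n) f ∧
  (∀ p ∈ Kpos n, 0 < f p) ∧
  (∃ F : (Fin n → ℝ) → ℝ, ContinuousOn F (closure (Kpos n)) ∧
    (∀ p ∈ Kpos n, F p = f p) ∧ ∀ p ∈ frontier (Kpos n), F p = 0) ∧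
  f (fun _ => 1) = 1 ∧
  (∀ t : ℝ, 0 < t → ∀ p ∈ Kpos n, f (t • p) = t * f p)

/-- Condition (1.10). -/
def Cond110 (n : ℕ) (f : (Fin n → ℝ) → ℝ) : Prop :=
  ∃ ε₀ > (0:ℝ), ∃ δ₀ > (0:ℝ), ∃ R₀ > (0:ℝ), ∀ R ≥ R₀, ∀ p : Fin n → ℝ,
    Real.sqrt (∑ i, (p i - 1) ^ 2) < δ₀ →
    ∀ i : Fin n, 1 + ε₀ ≤ f (Function.update p i (p i + R))

/-- A bounded domain whose boundary is a C^k hypersurface, given as a regular level set. -/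
def HasCkBoundary {n : ℕ} (Ω : Set (Euc n)) (k : ℕ∞) : Prop :=
  ∃ ρ : Euc n → ℝ, ContDiff ℝ k ρ ∧ Ω = {x | ρ x < 0} ∧
    frontier Ω = {x | ρ x = 0} ∧ ∀ x ∈ frontier Ω, fderiv ℝ ρ x ≠ 0

end

theorem aux_mono {n : ℕ} (hn : 2 ≤ n) (K : Set (Fin n → ℝ)) (hKo : IsOpen K) (hKc : Convex ℝ K)
    (f : (Fin n → ℝ) → ℝ) (hf1 : ContDiffOn ℝ 1 f K)
    (hfm : ∀ p ∈ K, ∀ i, 0 < fderiv ℝ f p (Pi.single i 1))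
    (a b : Fin n → ℝ) (ha : a ∈ K) (hb : b ∈ K) (hab : ∀ i, a i < b i) : f a < f b := by
  have hseg : ∀ t ∈ Icc (0:ℝ) 1, a + t • (b - a) ∈ K := fun t ht =>
    hKc.add_smul_sub_mem ha hb ht
  have hd : ∀ t ∈ Icc (0:ℝ) 1, HasDerivAt (fun t : ℝ => f (a + t • (b - a)))
      (fderiv ℝ f (a + t • (b - a)) (b - a)) t := by
    intro t ht
    have h1 : DifferentiableAt ℝ f (a + t • (b - a)) :=
      (hf1.differentiableOn (by norm_num)).differentiableAt (hKo.mem_nhds (hseg t ht))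
    have h2 : HasDerivAt (fun t : ℝ => a + t • (b - a)) (b - a) t := by
      simpa using ((hasDerivAt_id t).smul_const (b - a)).const_add a
    exact h1.hasFDerivAt.comp_hasDerivAt t h2
  have hpos : ∀ t ∈ Icc (0:ℝ) 1, 0 < fderiv ℝ f (a + t • (b - a)) (b - a) := by
    intro t ht
    have e : b - a = ∑ i, (b i - a i) • (Pi.single i (1:ℝ) : Fin n → ℝ) := by
      ext j
      simp [Finset.sum_apply, Pi.single_apply]
    generalize hp : a + t • (b - a) = p
    have hpK : p ∈ K := hp ▸ hseg t ht
    rw [e, map_sum]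
    haveI : Nonempty (Fin n) := ⟨⟨0, by omega⟩⟩
    apply Finset.sum_pos
    · intro i _
      rw [map_smul, smul_eq_mul]
      exact mul_pos (sub_pos.2 (hab i)) (hfm p hpK i)
    · exact Finset.univ_nonempty
  have hm : StrictMonoOn (fun t : ℝ => f (a + t • (b - a))) (Icc 0 1) := by
    apply strictMonoOn_of_deriv_pos (convex_Icc 0 1)
    · exact fun t ht => (hd t ht).continuousAt.continuousWithinAt
    · intro t ht
      have ht' := interior_subset ht
      rw [(hd t ht').deriv]
      exact hpos t ht'
  have := hm (left_mem_Icc.2 zero_le_one) (right_mem_Icc.2 zero_le_one) zero_lt_one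
  simpa using this

theorem aux_eig {n : ℕ} (A : Matrix (Fin n) (Fin n) ℝ) (κ : Fin n → ℝ)
    (h : IsEigenvalues A κ) (hA : ∀ v : Fin n → ℝ, v ≠ 0 → v ⬝ᵥ (A.mulVec v) < v ⬝ᵥ v)
    (i : Fin n) : κ i < 1 := by
  have h0 : A.charpoly.eval (κ i) = 0 := by
    rw [h, Polynomial.eval_prod]
    exact Finset.prod_eq_zero (Finset.mem_univ i) (by simp)
  rw [Matrix.eval_charpoly] at h0
  obtain ⟨v, hv, hv0⟩ := Matrix.exists_mulVec_eq_zero_iff.2 h0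
  have h1 : A.mulVec v = κ i • v := by
    rw [Matrix.sub_mulVec, sub_eq_zero] at hv0
    rw [← hv0]
    ext j
    simp [Matrix.scalar_apply, Matrix.mulVec_diagonal]
  have h2 := hA v hv
  rw [h1, dotProduct_smul, smul_eq_mul] at h2
  have h3 : 0 < v ⬝ᵥ v := by
    have : 0 ≤ v ⬝ᵥ v := Finset.sum_nonneg fun j _ => mul_self_nonneg _
    exact lt_of_le_of_ne this (fun h => hv (dotProduct_self_eq_zero.1 h.symm))
  by_contra hc
  push Not at hc
  nlinarith

theorem aux_quad {n : ℕ} (s : Set (Euc n)) (u : Euc n → ℝ) (x : Euc n) (ε : ℝ) (hε : 0 < ε)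
    (hu : 0 < u x)
    (hH : ∀ y : Fin n → ℝ, ∑ k, ∑ l, y k * y l * pd2 s u x k l ≤ - ε * ∑ k, y k ^ 2)
    (v : Fin n → ℝ) (hv : v ≠ 0) : v ⬝ᵥ ((hypA s u x).mulVec v) < v ⬝ᵥ v := by
  have h3 : 0 < v ⬝ᵥ v := by
    have : 0 ≤ v ⬝ᵥ v := Finset.sum_nonneg fun j _ => mul_self_nonneg _
    exact lt_of_le_of_ne this (fun h => hv (dotProduct_self_eq_zero.1 h.symm))
  have hS : 0 ≤ ∑ i, (pd1 s u x i) ^ 2 := Finset.sum_nonneg fun i _ => sq_nonneg _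
  have hw1 : 1 ≤ wgt s u x := by
    unfold wgt
    rw [Real.one_le_sqrt]
    linarith
  have hsym : ∀ i j, gmat s u x i j = gmat s u x j i := by
    intro i j
    simp only [gmat, Matrix.of_apply, eq_comm (a := i) (b := j), mul_comm (pd1 s u x i)]
  let H : Matrix (Fin n) (Fin n) ℝ := Matrix.of fun k l => pd2 s u x k l
  have hAe : hypA s u x = (1 / wgt s u x) • ((1 : Matrix (Fin n) (Fin n) ℝ) +
      u x • (gmat s u x * H * gmat s u x)) := by
    ext i j
    simp only [hypA, Matrix.of_apply, Matrix.smul_apply, Matrix.add_apply, smul_eq_mul,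
      Matrix.one_apply, Matrix.mul_apply, H, Finset.sum_mul]
    rw [Finset.sum_comm]
  have hT : (gmat s u x).transpose = gmat s u x := by
    ext i j
    exact hsym j i
  have hq : ∀ y : Fin n → ℝ, y ⬝ᵥ (H.mulVec y) ≤ - ε * (y ⬝ᵥ y) := by
    intro y
    have := hH y
    simp only [dotProduct, Matrix.mulVec, H, Matrix.of_apply, Finset.mul_sum]
    simp only [Finset.mul_sum] at this
    refine le_trans (le_of_eq ?_) (this.trans (le_of_eq ?_))
    · exact Finset.sum_congr rfl fun k _ => Finset.sum_congr rfl fun l _ => by ring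
    · exact Finset.sum_congr rfl fun k _ => by ring
  set y := (gmat s u x).mulVec v with hy
  have hyv : v ⬝ᵥ ((gmat s u x * H * gmat s u x).mulVec v) = y ⬝ᵥ (H.mulVec y) := by
    rw [← Matrix.mulVec_mulVec, ← Matrix.mulVec_mulVec, Matrix.dotProduct_mulVec,
      ← Matrix.mulVec_transpose, hT]
  have hval : v ⬝ᵥ ((hypA s u x).mulVec v) =
      (1 / wgt s u x) * (v ⬝ᵥ v + u x * (y ⬝ᵥ (H.mulVec y))) := by
    rw [hAe, Matrix.smul_mulVec, Matrix.add_mulVec, Matrix.smul_mulVec, Matrix.one_mulVec,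
      dotProduct_smul, dotProduct_add, dotProduct_smul, hyv]
    simp only [smul_eq_mul]
  rw [hval]
  have hyy : 0 ≤ y ⬝ᵥ y := Finset.sum_nonneg fun j _ => mul_self_nonneg _
  have hqy := hq y
  rw [div_mul_eq_mul_div, one_mul, div_lt_iff₀ (by linarith)]
  rcases eq_or_lt_of_le hw1 with hw | hw
  · have hS0 : ∑ i, (pd1 s u x i) ^ 2 = 0 := by
      have h4 : wgt s u x ^ 2 = 1 + ∑ i, (pd1 s u x i) ^ 2 := Real.sq_sqrt (by linarith)
      rw [← hw] at h4
      linarith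
    have hp : ∀ i, pd1 s u x i = 0 := by
      intro i
      have := (Finset.sum_eq_zero_iff_of_nonneg (fun i _ => sq_nonneg _)).1 hS0 i
        (Finset.mem_univ i)
      exact pow_eq_zero_iff (two_ne_zero) |>.1 this
    have hg : gmat s u x = 1 := by
      ext i j
      simp [gmat, hp, Matrix.one_apply]
    have hyv' : y = v := by rw [hy, hg, Matrix.one_mulVec]
    rw [hyv'] at hqy
    rw [← hw, hyv']
    have : u x * (v ⬝ᵥ H.mulVec v) < 0 := mul_neg_of_pos_of_neg hu (by nlinarith)
    linarith
  · have : u x * (y ⬝ᵥ H.mulVec y) ≤ 0 :=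
      mul_nonpos_of_nonneg_of_nonpos hu.le (by nlinarith)
    nlinarith

theorem aux_second {h : ℝ → ℝ} {h' : ℝ → ℝ} {c : ℝ}
    (hd : ∀ᶠ t in nhds (0:ℝ), HasDerivAt h (h' t) t) (hd2 : HasDerivAt h' c 0)
    (hmax : IsLocalMax h 0) : c ≤ 0 := by
  by_contra hc
  push Not at hc
  have e : deriv h =ᶠ[nhds 0] h' := hd.mono fun t ht => ht.deriv
  have hmin : IsLocalMin h 0 := by
    apply isLocalMin_of_deriv_deriv_pos
    · rw [e.deriv_eq, hd2.deriv]; exact hc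
    · exact hmax.deriv_eq_zero
    · exact hd.self_of_nhds.continuousAt
  have hcst : h =ᶠ[nhds 0] fun _ => h 0 := by
    filter_upwards [hmax, hmin] with t h1 h2
    exact le_antisymm h1 h2
  have e2 : deriv h =ᶠ[nhds 0] fun _ => 0 := by
    have := hcst.deriv
    simpa using this
  have : deriv h' 0 = 0 := by
    rw [(e.symm.trans e2).deriv_eq]; simp
  rw [hd2.deriv] at this
  linarith

theorem aux_hess {n : ℕ} (Ω : Set (Euc n)) (hΩo : IsOpen Ω) (u : Euc n → ℝ)
    (hu2 : ContDiffOn ℝ 2 u Ω) (x : Euc n) (hx : x ∈ Ω) (ε : ℝ)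
    (hmax : IsLocalMax (fun z : Euc n => u z + ε / 2 * ∑ i, z i ^ 2) x) (y : Fin n → ℝ) :
    ∑ k, ∑ l, y k * y l * pd2 Ω u x k l ≤ - ε * ∑ k, y k ^ 2 := by
  let Y : Euc n := WithLp.toLp 2 y
  have hYe : Y = ∑ i, y i • (EuclideanSpace.single i (1:ℝ) : Euc n) := by
    ext j
    simp [Y, Finset.sum_apply, Pi.single_apply]
  have hL : ∀ L : Euc n →L[ℝ] ℝ, L Y = ∑ i, y i * L (EuclideanSpace.single i 1) := by
    intro L
    rw [hYe, map_sum]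
    simp
  have hline : ∀ t : ℝ, HasDerivAt (fun t : ℝ => x + t • Y) Y t := fun t => by
    simpa using ((hasDerivAt_id t).smul_const Y).const_add x
  have hcont : Filter.Tendsto (fun t : ℝ => x + t • Y) (nhds 0) (nhds x) := by
    have := (hline 0).continuousAt.tendsto
    simpa using this
  have hnear : ∀ᶠ t in nhds (0:ℝ), x + t • Y ∈ Ω := hcont (hΩo.mem_nhds hx)
  have hmax' : IsLocalMax (fun t : ℝ => u (x + t • Y) + ε / 2 * ∑ i, (x i + t * y i) ^ 2) 0 := by
    have := hcont hmax
    change ∀ᶠ t in nhds (0:ℝ), _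
    filter_upwards [this] with t ht
    simpa [Y] using ht
  have hp : ∀ i, DifferentiableAt ℝ (fun z => pd1 Ω u z i) x := by
    intro i
    have h1 : ContDiffOn ℝ 1 (fderivWithin ℝ u Ω) Ω :=
      hu2.fderivWithin hΩo.uniqueDiffOn (by norm_num)
    have h2 := (h1.differentiableOn (by norm_num)).differentiableAt (hΩo.mem_nhds hx)
    exact h2.clm_apply (differentiableAt_const _)
  have key := aux_second
    (h := fun t : ℝ => u (x + t • Y) + ε / 2 * ∑ i, (x i + t * y i) ^ 2)
    (h' := fun t : ℝ => ∑ k, y k * pd1 Ω u (x + t • Y) k + ε * ∑ i, (x i + t * y i) * y i)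
    (c := ∑ k, y k * ∑ l, y l * pd2 Ω u x k l + ε * ∑ i, y i * y i) ?_ ?_ hmax'
  · simp only [Finset.mul_sum] at key ⊢
    have e1 : ∑ k, ∑ l, y k * y l * pd2 Ω u x k l = ∑ k, ∑ l, y k * (y l * pd2 Ω u x k l) := by
      simp only [mul_assoc]
    have e2 : ∑ k, -ε * y k ^ 2 = - ∑ k, ε * (y k * y k) := by
      rw [← Finset.sum_neg_distrib]
      exact Finset.sum_congr rfl fun k _ => by ring
    linarith
  · filter_upwards [hnear] with t ht
    have h1 : DifferentiableAt ℝ u (x + t • Y) :=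
      (hu2.differentiableOn (by norm_num)).differentiableAt (hΩo.mem_nhds ht)
    have h2 : HasDerivAt (fun t : ℝ => u (x + t • Y)) (∑ k, y k * pd1 Ω u (x + t • Y) k) t := by
      have h3 := h1.hasFDerivAt.comp_hasDerivAt t (hline t)
      rw [hL] at h3
      simp only [pd1, fderivWithin_of_isOpen hΩo ht]
      exact h3
    refine h2.add ?_
    have h4 : HasDerivAt (fun t : ℝ => ∑ i, (x i + t * y i) ^ 2)
        (∑ i, 2 * (x i + t * y i) * y i) t := by
      apply HasDerivAt.fun_sum
      intro i _
      have := (((hasDerivAt_id t).mul_const (y i)).const_add (x i)).fun_pow 2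
      simpa using this
    have h5 : ε * ∑ i, (x i + t * y i) * y i = ε / 2 * ∑ i, 2 * (x i + t * y i) * y i := by
      simp only [Finset.mul_sum]
      exact Finset.sum_congr rfl fun k _ => by ring
    rw [h5]
    exact h4.const_mul (ε / 2)
  · apply HasDerivAt.add
    · apply HasDerivAt.fun_sum
      intro k _
      apply HasDerivAt.const_mul
      have h1 := (hp k).hasFDerivAt
      have h0 : x = x + (0:ℝ) • Y := by simp
      rw [h0] at h1
      have h3 := h1.comp_hasDerivAt (0:ℝ) (hline 0)
      rw [hL, ← h0] at h3
      simp only [pd2, fderivWithin_of_isOpen hΩo hx]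
      exact h3
    · apply HasDerivAt.const_mul
      apply HasDerivAt.fun_sum
      intro i _
      have := (((hasDerivAt_id (0:ℝ)).mul_const (y i)).const_add (x i)).mul_const (y i)
      simpa using this

theorem aux_max {n : ℕ} (Ω : Set (Euc n)) (hΩo : IsOpen Ω) (hne : Ω.Nonempty)
    (hΩb : Bornology.IsBounded Ω) (u : Euc n → ℝ) (hu0 : ContinuousOn u (closure Ω))
    (hupos : ∀ x ∈ Ω, 0 < u x) (hubd : ∀ x ∈ frontier Ω, u x = 0) :
    ∃ ε > 0, ∃ x ∈ Ω, IsLocalMax (fun z : Euc n => u z + ε / 2 * ∑ i, z i ^ 2) x := by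
  obtain ⟨p, hp⟩ := hne
  have hcpt : IsCompact (closure Ω) := hΩb.isCompact_closure
  have hqc : Continuous (fun z : Euc n => ∑ i, z i ^ 2) := by fun_prop
  obtain ⟨R, hR⟩ := hcpt.bddAbove_image hqc.continuousOn
  have hR' : ∀ z ∈ closure Ω, ∑ i, z i ^ 2 ≤ R := fun z hz => hR ⟨z, hz, rfl⟩
  have hq0 : ∀ z : Euc n, 0 ≤ ∑ i, z i ^ 2 := fun z => Finset.sum_nonneg fun i _ => sq_nonneg _
  have hR0 : 0 ≤ R := (hq0 p).trans (hR' p (subset_closure hp))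
  have hup := hupos p hp
  have hε : 0 < u p / (R + 1) := by positivity
  refine ⟨u p / (R + 1), hε, ?_⟩
  set ε := u p / (R + 1) with hεd
  have hεR : ε * (R + 1) = u p := by rw [hεd]; field_simp
  obtain ⟨x, hx, hxm⟩ := hcpt.exists_isMaxOn ⟨p, subset_closure hp⟩
    (hu0.add (hqc.continuousOn.const_smul (ε / 2)))
  have hxΩ : x ∈ Ω := by
    by_contra hc
    have hfr : x ∈ frontier Ω := by
      rw [frontier, hΩo.interior_eq]
      exact ⟨hx, hc⟩
    have h1 := hxm (subset_closure hp)
    simp only [mem_setOf_eq, smul_eq_mul, Pi.add_apply, Pi.smul_apply] at h1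
    rw [hubd x hfr] at h1
    have h2 := hR' x hx
    have h3 := hq0 p
    have h4 : ε / 2 * ∑ i, x i ^ 2 ≤ ε / 2 * R := by gcongr
    have h5 : 0 ≤ ε / 2 * ∑ i, p i ^ 2 := by positivity
    nlinarith
  refine ⟨x, hxΩ, ?_⟩
  filter_upwards [hΩo.mem_nhds hxΩ] with z hz
  have h1 := hxm (subset_closure hz)
  simpa [smul_eq_mul] using h1

/-- Necessity of σ < 1 (Lemma 3.2 of the paper). -/
theorem stmt_8 {n : ℕ} (hn : 2 ≤ n) (K : Set (Fin n → ℝ)) (hK : IsSymmCone K)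
    (f : (Fin n → ℝ) → ℝ) (hf1 : ContDiffOn ℝ 1 f K)
    (hfm : ∀ p ∈ K, ∀ i, 0 < fderiv ℝ f p (Pi.single i 1))
    (hfn : f (fun _ => 1) = 1)
    (Ω : Set (Euc n)) (hΩo : IsOpen Ω) (hΩc : IsConnected Ω) (hΩb : Bornology.IsBounded Ω)
    (σ : ℝ) (hσ : 0 < σ)
    (u : Euc n → ℝ) (hu2 : ContDiffOn ℝ 2 u Ω) (hu0 : ContinuousOn u (closure Ω))
    (hupos : ∀ x ∈ Ω, 0 < u x) (hubd : ∀ x ∈ frontier Ω, u x = 0)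
    (heq : ∀ x ∈ Ω, ∃ κ : Fin n → ℝ, IsEigenvalues (hypA Ω u x) κ ∧ κ ∈ K ∧ f κ = σ) :
    σ < 1 := by
  obtain ⟨ε, hε, x, hx, hmax⟩ := aux_max Ω hΩo hΩc.nonempty hΩb u hu0 hupos hubd
  obtain ⟨κ, hκ, hκK, hfκ⟩ := heq x hx
  have hlt : ∀ i, κ i < 1 := aux_eig _ κ hκ
    (aux_quad Ω u x ε hε (hupos x hx) (aux_hess Ω hΩo u hu2 x hx ε hmax))
  obtain ⟨hKo, hKc, -, -, hKp⟩ := hK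
  rw [← hfκ, ← hfn]
  exact aux_mono hn K hKo hKc f hf1 hfm κ _ hκK (hKp fun _ => one_pos) hlt
end

section
/- Let Ω ⊆ ℝⁿ be open, u ∈ C³(Ω), and ψ ∈ C¹(Ω × ℝ). Let G = G(r,p,z) be a real-valued C¹ function defined on an open subset of Symₙ(ℝ) × ℝⁿ × ℝ that contains {(D²u(x), Du(x), u(x)) : x ∈ Ω}, and suppose G is orthogonally invariant: G(OᵀrO, Oᵀp, z) = G(r,p,z) for every orthogonal n×n matrix O and every (r,p,z) in the domain. Assume G(D²u(x), Du(x), u(x)) = ψ(x, u(x)) for all x ∈ Ω. Write G^{st} = ∂G/∂r_{st}, G^{s} = ∂G/∂p_s and G_u = ∂G/∂z, all evaluated at (D²u(x), Du(x), u(x)), and for v ∈ C²(Ω) set Lv = Σ_{s,t} G^{st} v_{st} + Σ_s G^{s} v_s. Then for all indices 1 ≤ i, j ≤ n and every x ∈ Ω: L(x_i u_j − x_j u_i) = (ψ_z(x,u(x)) − G_u)·(x_i u_j − x_j u_i) + x_i ψ_{x_j}(x,u(x)) − x_j ψ_{x_i}(x,u(x)), where u_i, u_j denote first partial derivatives of u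 and ψ_z, ψ_{x_i} the partial derivatives of ψ. -/
open scoped BigOperators
open Set

open scoped Matrix

/-- The point (D²u(x), Du(x), u(x)) at which the nonlinear operator G is evaluated. -/
noncomputable def qpt {n : ℕ} (s : Set (Euc n)) (u : Euc n → ℝ) (x : Euc n) :
    (Fin n → Fin n → ℝ) × (Fin n → ℝ) × ℝ :=
  ((fun i j => pd2 s u x i j), (fun i => pd1 s u x i), u x)

lemma pd1_eq {n : ℕ} {Ω : Set (Euc n)} (hΩ : IsOpen Ω) (f : Euc n → ℝ) {x : Euc n} (hx : x ∈ Ω)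
    (i : Fin n) : pd1 Ω f x i = fderiv ℝ f x (EuclideanSpace.single i 1) := by
  rw [pd1, fderivWithin_of_isOpen hΩ hx]

lemma pd2_def {n : ℕ} (Ω : Set (Euc n)) (f : Euc n → ℝ) (x : Euc n)
    (i j : Fin n) : pd2 Ω f x i j = pd1 Ω (fun y => pd1 Ω f y i) x j := rfl

lemma pd1_congr {n : ℕ} {Ω : Set (Euc n)} {f g : Euc n → ℝ} (h : ∀ y ∈ Ω, f y = g y)
    {x : Euc n} (hx : x ∈ Ω) (i : Fin n) : pd1 Ω f x i = pd1 Ω g x i := by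
  rw [pd1, pd1, fderivWithin_congr h (h x hx)]

lemma pd1_contDiffOn {n : ℕ} {Ω : Set (Euc n)} (hΩ : IsOpen Ω) {f : Euc n → ℝ} {k m : WithTop ℕ∞}
    (hf : ContDiffOn ℝ k f Ω) (hk : m + 1 ≤ k) (i : Fin n) :
    ContDiffOn ℝ m (fun y => pd1 Ω f y i) Ω :=
  (hf.fderivWithin hΩ.uniqueDiffOn hk).clm_apply contDiffOn_const

lemma pd2_symm {n : ℕ} {Ω : Set (Euc n)} (hΩ : IsOpen Ω) {f : Euc n → ℝ}
    (hf : ContDiffOn ℝ 2 f Ω) {x : Euc n} (hx : x ∈ Ω) (i j : Fin n) :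
    pd2 Ω f x i j = pd2 Ω f x j i := by
  have hs : IsSymmSndFDerivWithinAt ℝ f Ω x := by
    refine (hf x hx).isSymmSndFDerivWithinAt (by simp) hΩ.uniqueDiffOn ?_ hx
    rw [hΩ.interior_eq]; exact subset_closure hx
  have hd : DifferentiableWithinAt ℝ (fderivWithin ℝ f Ω) Ω x :=
    ((hf.fderivWithin hΩ.uniqueDiffOn (m := 1) (by norm_num)).differentiableOn (by norm_num)) x hx
  have key : ∀ a b : Fin n, pd2 Ω f x a b
      = fderivWithin ℝ (fderivWithin ℝ f Ω) Ω x (EuclideanSpace.single b 1)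
        (EuclideanSpace.single a 1) := by
    intro a b
    unfold pd2 pd1
    rw [fderivWithin_clm_apply (hΩ.uniqueDiffWithinAt hx) hd (differentiableWithinAt_const _)]
    simp
  rw [key, key, hs.eq]

lemma pd1_sub {n : ℕ} {Ω : Set (Euc n)} (hΩ : IsOpen Ω) {f g : Euc n → ℝ} {x : Euc n} (hx : x ∈ Ω)
    (hf : DifferentiableAt ℝ f x) (hg : DifferentiableAt ℝ g x) (s : Fin n) :
    pd1 Ω (fun y => f y - g y) x s = pd1 Ω f x s - pd1 Ω g x s := by
  simp only [pd1_eq hΩ _ hx]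
  rw [fderiv_fun_sub hf hg]; rfl

lemma pd1_add {n : ℕ} {Ω : Set (Euc n)} (hΩ : IsOpen Ω) {f g : Euc n → ℝ} {x : Euc n} (hx : x ∈ Ω)
    (hf : DifferentiableAt ℝ f x) (hg : DifferentiableAt ℝ g x) (s : Fin n) :
    pd1 Ω (fun y => f y + g y) x s = pd1 Ω f x s + pd1 Ω g x s := by
  simp only [pd1_eq hΩ _ hx]
  rw [fderiv_fun_add hf hg]; rfl

lemma pd1_const_mul {n : ℕ} {Ω : Set (Euc n)} (hΩ : IsOpen Ω) {f : Euc n → ℝ} {x : Euc n}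
    (hx : x ∈ Ω) (hf : DifferentiableAt ℝ f x) (c : ℝ) (s : Fin n) :
    pd1 Ω (fun y => c * f y) x s = c * pd1 Ω f x s := by
  simp only [pd1_eq hΩ _ hx]
  rw [fderiv_const_mul hf]; rfl

lemma coord_hasFDerivAt {n : ℕ} (i : Fin n) (x : Euc n) :
    HasFDerivAt (fun y : Euc n => y i) (EuclideanSpace.proj i : Euc n →L[ℝ] ℝ) x :=
  (EuclideanSpace.proj i : Euc n →L[ℝ] ℝ).hasFDerivAt

lemma pd1_coord_mul {n : ℕ} {Ω : Set (Euc n)} (hΩ : IsOpen Ω) {f : Euc n → ℝ} {x : Euc n}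
    (hx : x ∈ Ω) (hf : DifferentiableAt ℝ f x) (i s : Fin n) :
    pd1 Ω (fun y => y i * f y) x s = (if i = s then 1 else 0) * f x + x i * pd1 Ω f x s := by
  simp only [pd1_eq hΩ _ hx]
  rw [((coord_hasFDerivAt i x).fun_mul hf.hasFDerivAt).fderiv]
  simp
  ring_nf

lemma skew_cube {n : ℕ} (i j : Fin n) (A : Matrix (Fin n) (Fin n) ℝ)
    (hA : A = Matrix.single i j 1 - Matrix.single j i 1) : A * A * A = -A := by
  subst hA
  by_cases h : i = j
  · subst h; simp
  · simp [sub_mul, mul_sub, h, Ne.symm h]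
    abel

/-- infinitesimal invariance -/
lemma inf_inv {n : ℕ} (G : (Fin n → Fin n → ℝ) × (Fin n → ℝ) × ℝ → ℝ)
    (q : (Fin n → Fin n → ℝ) × (Fin n → ℝ) × ℝ) (hd : DifferentiableAt ℝ G q)
    (hinv : ∀ O : Matrix (Fin n) (Fin n) ℝ, Oᵀ * O = 1 →
      G ((fun i j => (Oᵀ * Matrix.of q.1 * O) i j), Matrix.mulVec Oᵀ q.2.1, q.2.2) = G q)
    (A : Matrix (Fin n) (Fin n) ℝ) (hT : Aᵀ = -A) (h3 : A * A * A = -A) :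
    fderiv ℝ G q ((fun s t => (Matrix.of q.1 * A - A * Matrix.of q.1) s t),
      -(Matrix.mulVec A q.2.1), 0) = 0 := by
  obtain ⟨r, p, z⟩ := q
  simp only at hinv ⊢
  set R : Matrix (Fin n) (Fin n) ℝ := Matrix.of r with hR
  set O : ℝ → Matrix (Fin n) (Fin n) ℝ :=
    fun t => 1 + Real.sin t • A + (1 - Real.cos t) • (A * A) with hO
  have hOT : ∀ t, (O t)ᵀ = 1 - Real.sin t • A + (1 - Real.cos t) • (A * A) := by
    intro t
    simp [hO, hT, sub_eq_add_neg]
  have horth : ∀ t, (O t)ᵀ * O t = 1 := by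
    intro t
    have h4 : A * A * (A * A) = -(A * A) := by rw [← mul_assoc, h3, neg_mul]
    have h3' : A * (A * A) = -A := by rw [← mul_assoc, h3]
    rw [hOT]
    simp only [hO, add_mul, mul_add, sub_mul, mul_one, one_mul, smul_mul_assoc, mul_smul_comm,
      h3, h3', h4]
    have := Real.sin_sq_add_cos_sq t
    have h5 : 2 * (1 - Real.cos t) - Real.sin t ^ 2 - (1 - Real.cos t) ^ 2 = 0 := by linarith
    have h6 : (2 * (1 - Real.cos t) - Real.sin t ^ 2 - (1 - Real.cos t) ^ 2) • (A * A) = 0 := by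
      rw [h5, zero_smul]
    rw [← sub_eq_zero, ← h6]
    module
  have hs : HasDerivAt Real.sin 1 0 := by simpa using Real.hasDerivAt_sin 0
  have hc : HasDerivAt (fun t => 1 - Real.cos t) 0 0 := by
    simpa using (Real.hasDerivAt_cos 0).const_sub 1
  have hOent : ∀ a b, HasDerivAt (fun t => O t a b) (A a b) 0 := by
    intro a b
    have := ((hs.mul_const (A a b)).const_add ((1 : Matrix (Fin n) (Fin n) ℝ) a b)).fun_add
      (hc.mul_const ((A * A) a b))
    exact (this.congr_deriv (by simp))
  have hO0 : O 0 = 1 := by simp [hO]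
  have hcurve : HasDerivAt (fun t => (((fun i j => ((O t)ᵀ * R * O t) i j),
      Matrix.mulVec (O t)ᵀ p, z) : (Fin n → Fin n → ℝ) × (Fin n → ℝ) × ℝ))
      ((fun s t => (R * A - A * R) s t), -(Matrix.mulVec A p), 0) 0 := by
    refine HasDerivAt.prodMk ?_ (HasDerivAt.prodMk ?_ (hasDerivAt_const _ _))
    · rw [hasDerivAt_pi]; intro a
      rw [hasDerivAt_pi]; intro b
      have : HasDerivAt (fun t => ∑ k, (∑ l, O t l a * R l k) * O t k b)
          (∑ k, ((∑ l, A l a * R l k) * O 0 k b + (∑ l, O 0 l a * R l k) * A k b)) 0 :=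
        HasDerivAt.fun_sum fun k _ =>
          (HasDerivAt.fun_sum fun l _ => (hOent l a).mul_const _).mul (hOent k b)
      refine this.congr_deriv ?_
      symm
      have e : R * A - A * R = Aᵀ * R * 1 + (1 : Matrix (Fin n) (Fin n) ℝ)ᵀ * R * A := by
        rw [hT]; simp; abel
      rw [e, hO0, Finset.sum_add_distrib]
      simp only [Matrix.add_apply, Matrix.mul_apply, Matrix.transpose_apply]
    · rw [hasDerivAt_pi]; intro a
      have : HasDerivAt (fun t => ∑ l, O t l a * p l) (∑ l, A l a * p l) 0 :=
        HasDerivAt.fun_sum fun l _ => (hOent l a).mul_const _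
      refine this.congr_deriv ?_
      rw [← Matrix.neg_mulVec, ← hT]; rfl
  have h0 : (((fun i j => ((O 0)ᵀ * R * O 0) i j),
      Matrix.mulVec (O 0)ᵀ p, z) : (Fin n → Fin n → ℝ) × (Fin n → ℝ) × ℝ) = (r, p, z) := by
    simp [hO0, hR]
  have hcomp := HasFDerivAt.comp_hasDerivAt_of_eq (0:ℝ) hd.hasFDerivAt hcurve h0.symm
  have hconst : (G ∘ fun t => (((fun i j => ((O t)ᵀ * R * O t) i j),
      Matrix.mulVec (O t)ᵀ p, z) : (Fin n → Fin n → ℝ) × (Fin n → ℝ) × ℝ)) = fun _ => G (r, p, z) := by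
    funext t; exact hinv (O t) (horth t)
  rw [hconst] at hcomp
  exact hcomp.unique (hasDerivAt_const _ _)

lemma clm_expand {n : ℕ} (T : ((Fin n → Fin n → ℝ) × (Fin n → ℝ) × ℝ) →L[ℝ] ℝ)
    (V : Fin n → Fin n → ℝ) (P : Fin n → ℝ) :
    (∑ s, ∑ t, T (Pi.single s (Pi.single t 1), 0, 0) * V s t)
      + (∑ s, T (0, Pi.single s 1, 0) * P s) = T (V, P, 0) := by
  have e : ((V, P, 0) : (Fin n → Fin n → ℝ) × (Fin n → ℝ) × ℝ)
      = (∑ s, ∑ t, V s t • ((Pi.single s (Pi.single t 1), 0, 0) :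
          (Fin n → Fin n → ℝ) × (Fin n → ℝ) × ℝ))
        + ∑ s, P s • ((0, Pi.single s 1, 0) : (Fin n → Fin n → ℝ) × (Fin n → ℝ) × ℝ) := by
    refine Prod.ext ?_ (Prod.ext ?_ ?_)
    · funext a b
      simp [Prod.fst_sum, Finset.sum_apply, Pi.single_apply]
    · funext a
      simp [Prod.fst_sum, Prod.snd_sum, Finset.sum_apply, Pi.single_apply]
    · simp [Prod.snd_sum]
  rw [e]
  simp only [map_add, map_sum, map_smul, smul_eq_mul]
  simp only [mul_comm]

/-- the rotation-invariance identity L(x_i u_j − x_j u_i) =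
(ψ_z − G_u)(x_i u_j − x_j u_i) + x_i ψ_{x_j} − x_j ψ_{x_i} (Lemma 4.3 of the paper). -/
theorem stmt_10 {n : ℕ} (hn : 2 ≤ n) (Ω : Set (Euc n)) (hΩo : IsOpen Ω)
    (u : Euc n → ℝ) (hu : ContDiffOn ℝ 3 u Ω)
    (ψ : Euc n × ℝ → ℝ) (hψ : ContDiffOn ℝ 1 ψ (Ω ×ˢ (Set.univ : Set ℝ)))
    (G : (Fin n → Fin n → ℝ) × (Fin n → ℝ) × ℝ → ℝ)
    (D : Set ((Fin n → Fin n → ℝ) × (Fin n → ℝ) × ℝ)) (hD : IsOpen D)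
    (hG : ContDiffOn ℝ 1 G D)
    (hmem : ∀ x ∈ Ω, qpt Ω u x ∈ D)
    (hinv : ∀ O : Matrix (Fin n) (Fin n) ℝ, Oᵀ * O = 1 → ∀ q ∈ D,
      G ((fun i j => (Oᵀ * Matrix.of q.1 * O) i j), Matrix.mulVec Oᵀ q.2.1, q.2.2) = G q)
    (heq : ∀ x ∈ Ω, G (qpt Ω u x) = ψ (x, u x)) :
    ∀ x ∈ Ω, ∀ i j : Fin n,
      (∑ s, ∑ t, fderiv ℝ G (qpt Ω u x) (Pi.single s (Pi.single t 1), 0, 0)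
          * pd2 Ω (fun y => y i * pd1 Ω u y j - y j * pd1 Ω u y i) x s t)
      + (∑ s, fderiv ℝ G (qpt Ω u x) (0, Pi.single s 1, 0)
          * pd1 Ω (fun y => y i * pd1 Ω u y j - y j * pd1 Ω u y i) x s)
      = (deriv (fun t => ψ (x, t)) (u x) - fderiv ℝ G (qpt Ω u x) (0, 0, 1))
            * (x i * pd1 Ω u x j - x j * pd1 Ω u x i)
        + x i * fderiv ℝ (fun y => ψ (y, u x)) x (EuclideanSpace.single j 1)
        - x j * fderiv ℝ (fun y => ψ (y, u x)) x (EuclideanSpace.single i 1) := by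
  intro x hx i j
  rw [clm_expand]
  have hΩn : Ω ∈ nhds x := hΩo.mem_nhds hx
  -- regularity
  have hu1 : ∀ s, ContDiffOn ℝ 2 (fun y => pd1 Ω u y s) Ω := fun s =>
    pd1_contDiffOn hΩo hu (by norm_num) s
  have hu2 : ∀ s t, ContDiffOn ℝ 1 (fun y => pd2 Ω u y s t) Ω := fun s t =>
    pd1_contDiffOn hΩo (hu1 s) (by norm_num) t
  have du : ∀ y ∈ Ω, DifferentiableAt ℝ u y := fun y hy =>
    (hu.contDiffAt (hΩo.mem_nhds hy)).differentiableAt (by norm_num)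
  have du1 : ∀ s, ∀ y ∈ Ω, DifferentiableAt ℝ (fun y => pd1 Ω u y s) y := fun s y hy =>
    ((hu1 s).contDiffAt (hΩo.mem_nhds hy)).differentiableAt (by norm_num)
  have du2 : ∀ s t, ∀ y ∈ Ω, DifferentiableAt ℝ (fun y => pd2 Ω u y s t) y := fun s t y hy =>
    ((hu2 s t).contDiffAt (hΩo.mem_nhds hy)).differentiableAt (by norm_num)
  have dc : ∀ (s : Fin n) (y : Euc n), DifferentiableAt ℝ (fun y : Euc n => y s) y := fun s y =>
    (coord_hasFDerivAt s y).differentiableAt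
  have hu' : ContDiffOn ℝ 2 u Ω := hu.of_le (by norm_num)
  have sym2 : ∀ s t, ∀ y ∈ Ω, pd2 Ω u y s t = pd2 Ω u y t s := fun s t y hy =>
    pd2_symm hΩo hu' hy s t
  have sym3 : ∀ k s t, pd1 Ω (fun y => pd2 Ω u y k s) x t = pd1 Ω (fun y => pd2 Ω u y s t) x k := by
    intro k s t
    rw [pd1_congr (fun y hy => sym2 k s y hy) hx t]
    exact pd2_symm hΩo (hu1 s) hx k t
  -- derivatives of the angular derivative
  set v : Euc n → ℝ := fun y => y i * pd1 Ω u y j - y j * pd1 Ω u y i with hv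
  have hv1 : ∀ s, ∀ y ∈ Ω, pd1 Ω v y s =
      ((if i = s then 1 else 0) * pd1 Ω u y j + y i * pd2 Ω u y j s)
      - ((if j = s then 1 else 0) * pd1 Ω u y i + y j * pd2 Ω u y i s) := by
    intro s y hy
    rw [hv, pd1_sub hΩo hy ((dc i y).fun_mul (du1 j y hy)) ((dc j y).fun_mul (du1 i y hy)),
      pd1_coord_mul hΩo hy (du1 j y hy), pd1_coord_mul hΩo hy (du1 i y hy)]
    rfl
  have hv2 : ∀ s t, pd2 Ω v x s t =
      ((if i = s then 1 else 0) * pd2 Ω u x j t + ((if i = t then 1 else 0) * pd2 Ω u x j s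
        + x i * pd1 Ω (fun y => pd2 Ω u y s t) x j))
      - ((if j = s then 1 else 0) * pd2 Ω u x i t + ((if j = t then 1 else 0) * pd2 Ω u x i s
        + x j * pd1 Ω (fun y => pd2 Ω u y s t) x i)) := by
    intro s t
    have d1 : ∀ (a b : Fin n) (c : ℝ), DifferentiableAt ℝ (fun y => c * pd1 Ω u y b) x := fun a b c =>
      (du1 b x hx).const_mul c
    have d2 : ∀ a b, DifferentiableAt ℝ (fun y : Euc n => y a * pd2 Ω u y b s) x := fun a b =>
      (dc a x).fun_mul (du2 b s x hx)
    rw [pd2_def, pd1_congr (fun y hy => hv1 s y hy) hx t,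
      pd1_sub hΩo hx ((d1 i j _).fun_add (d2 i j)) ((d1 j i _).fun_add (d2 j i)),
      pd1_add hΩo hx (d1 i j _) (d2 i j), pd1_add hΩo hx (d1 j i _) (d2 j i),
      pd1_const_mul hΩo hx (du1 j x hx), pd1_const_mul hΩo hx (du1 i x hx),
      pd1_coord_mul hΩo hx (du2 j s x hx), pd1_coord_mul hΩo hx (du2 i s x hx),
      sym3 j s t, sym3 i s t]
    rfl
  -- the equation differentiated
  have hGd : DifferentiableAt ℝ G (qpt Ω u x) :=
    (hG.contDiffAt (hD.mem_nhds (hmem x hx))).differentiableAt (by norm_num)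
  have hψd : DifferentiableAt ℝ ψ (x, u x) :=
    (hψ.contDiffAt ((hΩo.prod isOpen_univ).mem_nhds ⟨hx, mem_univ _⟩)).differentiableAt
      (by norm_num)
  set T := fderiv ℝ G (qpt Ω u x) with hT
  set Ψ := fderiv ℝ ψ (x, u x) with hΨ
  set Q : Euc n →L[ℝ] ((Fin n → Fin n → ℝ) × (Fin n → ℝ) × ℝ) :=
    ContinuousLinearMap.prod
      (ContinuousLinearMap.pi fun s => ContinuousLinearMap.pi fun t =>
        fderiv ℝ (fun y => pd2 Ω u y s t) x)
      (ContinuousLinearMap.prod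
        (ContinuousLinearMap.pi fun s => fderiv ℝ (fun y => pd1 Ω u y s) x) (fderiv ℝ u x)) with hQ
  have hq : HasFDerivAt (qpt Ω u) Q x := by
    refine HasFDerivAt.prodMk ?_ (HasFDerivAt.prodMk ?_ (du x hx).hasFDerivAt)
    · rw [hasFDerivAt_pi]; intro s
      rw [hasFDerivAt_pi]; intro t
      exact (du2 s t x hx).hasFDerivAt
    · rw [hasFDerivAt_pi]; intro s
      exact (du1 s x hx).hasFDerivAt
  have h1 : HasFDerivAt (G ∘ qpt Ω u) (T.comp Q) x := hGd.hasFDerivAt.comp x hq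
  have h2 : HasFDerivAt (fun y => ψ (y, u y))
      (Ψ.comp ((ContinuousLinearMap.id ℝ (Euc n)).prod (fderiv ℝ u x))) x :=
    HasFDerivAt.comp (f := fun y => (y, u y)) x hψd.hasFDerivAt
      ((hasFDerivAt_id x).prodMk (du x hx).hasFDerivAt)
  have h12 : (fun y => ψ (y, u y)) =ᶠ[nhds x] G ∘ qpt Ω u := by
    filter_upwards [hΩn] with y hy using (heq y hy).symm
  have hTQ := h1.unique (h2.congr_of_eventuallyEq h12.symm)
  have hψx : fderiv ℝ (fun y => ψ (y, u x)) x
      = Ψ.comp ((ContinuousLinearMap.id ℝ (Euc n)).prod 0) :=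
    (HasFDerivAt.comp (f := fun y => (y, u x)) x hψd.hasFDerivAt
      ((hasFDerivAt_id x).prodMk (hasFDerivAt_const _ _))).fderiv
  have hψz : deriv (fun t => ψ (x, t)) (u x) = Ψ (0, 1) :=
    (HasFDerivAt.comp_hasDerivAt (f := fun t => (x, t)) (u x) hψd.hasFDerivAt
      ((hasDerivAt_const _ _).prodMk (hasDerivAt_id _))).deriv
  have hTk : ∀ k, T ((fun s t => pd1 Ω (fun y => pd2 Ω u y s t) x k), (fun s => pd2 Ω u x s k),
      pd1 Ω u x k) = fderiv ℝ (fun y => ψ (y, u x)) x (EuclideanSpace.single k 1)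
        + deriv (fun t => ψ (x, t)) (u x) * pd1 Ω u x k := by
    intro k
    have e1 : (((fun s t => pd1 Ω (fun y => pd2 Ω u y s t) x k), (fun s => pd2 Ω u x s k),
      pd1 Ω u x k) : (Fin n → Fin n → ℝ) × (Fin n → ℝ) × ℝ)
        = Q (EuclideanSpace.single k 1) := by
      simp only [pd2_def Ω u x, pd1_eq hΩo _ hx]
      rfl
    rw [e1, ← ContinuousLinearMap.comp_apply, hTQ, hψx, hψz, pd1_eq hΩo _ hx]
    simp only [ContinuousLinearMap.comp_apply, ContinuousLinearMap.prod_apply,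
      ContinuousLinearMap.id_apply, zero_apply]
    rw [mul_comm, ← smul_eq_mul, ← map_smul, ← map_add]
    simp
  -- infinitesimal invariance
  set A : Matrix (Fin n) (Fin n) ℝ := Matrix.single i j 1 - Matrix.single j i 1 with hA
  have hAT : Aᵀ = -A := by simp [hA]
  have hI := inf_inv G (qpt Ω u x) hGd (fun O hO => hinv O hO _ (hmem x hx)) A hAT
    (skew_cube i j A hA)
  rw [← hT] at hI
  have hdec : (((fun s t => pd2 Ω v x s t), (fun s => pd1 Ω v x s), 0) :
      (Fin n → Fin n → ℝ) × (Fin n → ℝ) × ℝ)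
      = x i • ((fun s t => pd1 Ω (fun y => pd2 Ω u y s t) x j), (fun s => pd2 Ω u x s j),
          pd1 Ω u x j)
        - x j • ((fun s t => pd1 Ω (fun y => pd2 Ω u y s t) x i), (fun s => pd2 Ω u x s i),
          pd1 Ω u x i)
        - (x i * pd1 Ω u x j - x j * pd1 Ω u x i) • (0, 0, 1)
        - ((fun s t => (Matrix.of (qpt Ω u x).1 * A - A * Matrix.of (qpt Ω u x).1) s t),
            -(Matrix.mulVec A (qpt Ω u x).2.1), 0) := by
    refine Prod.ext ?_ (Prod.ext ?_ ?_)
    · funext s t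
      simp only [hv2]
      simp [hA, qpt, mul_sub, sub_mul, Matrix.mul_apply, Matrix.single_apply, ite_and,
        sym2 s i x hx, sym2 s j x hx]
      ring
    · funext s
      simp only [hv1 s x hx]
      simp [hA, qpt, Matrix.mulVec, dotProduct, Matrix.single_apply, ite_and, sub_mul,
        sym2 s i x hx, sym2 s j x hx]
      ring
    · simp
  have hfin := congrArg T hdec
  rw [map_sub, map_sub, map_sub, map_smul, map_smul, map_smul, hTk, hTk, hI] at hfin
  simp only [smul_eq_mul] at hfin
  refine hfin.trans ?_
  ring
end

section
/- Let K ⊆ ℝⁿ be an open convex symmetric cone containing K_n^+, and let f : K → ℝ be C¹, symmetric (invariant under permutations of coordinates), concave on K, positively homogeneous of degree one, and normalized by f(1,…,1) = 1. Then Σ_{i=1}^{n} ∂f/∂λ_i (λ) ≥ 1 for every λ ∈ K. -/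
open scoped BigOperators
open Set

/-- Σ_i f_i(λ) ≥ 1 for a normalized concave symmetric homogeneous
curvature function (inequality (1.12) of the paper). -/
theorem stmt_12 {n : ℕ} (hn : 2 ≤ n) (K : Set (Fin n → ℝ)) (hK : IsSymmCone K)
    (f : (Fin n → ℝ) → ℝ) (hf1 : ContDiffOn ℝ 1 f K)
    (hsym : ∀ p ∈ K, ∀ g : Equiv.Perm (Fin n), f (p ∘ g) = f p)
    (hconc : ConcaveOn ℝ K f)
    (hfh : ∀ t : ℝ, 0 < t → ∀ p ∈ K, f (t • p) = t * f p)
    (hfn : f (fun _ => 1) = 1) :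
    ∀ p ∈ K, 1 ≤ ∑ i, fderiv ℝ f p (Pi.single i 1) := by
  intro p hp
  obtain ⟨hopen, hconv, hcone, -, hpos⟩ := hK
  have h1 : (fun _ => 1 : Fin n → ℝ) ∈ K := hpos (fun _ => one_pos)
  rw [← map_sum]
  have hsum : (∑ i, Pi.single i (1:ℝ) : Fin n → ℝ) = fun _ => 1 :=
    Finset.univ_sum_single (fun _ => (1:ℝ))
  rw [hsum]
  have hd : HasFDerivAt f (fderiv ℝ f p) p :=
    ((hf1.differentiableOn (by norm_num)).differentiableAt (hopen.mem_nhds hp)).hasFDerivAt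
  have hline := hd.hasLineDerivAt (fun _ => (1:ℝ))
  have hg := hline.hasDerivWithinAt (s := Ioi 0)
  rw [hasDerivWithinAt_iff_tendsto_slope' (by simp)] at hg
  refine ge_of_tendsto hg ?_
  filter_upwards [self_mem_nhdsWithin] with t ht
  have ht0 : (0:ℝ) < t := ht
  have hq : t • (fun _ => 1 : Fin n → ℝ) ∈ K := hcone _ h1 t ht0
  have hc := hconc.2 hp hq (show (0:ℝ) ≤ 1/2 by norm_num) (show (0:ℝ) ≤ 1/2 by norm_num) (by norm_num)
  have hm := hconv hp hq (show (0:ℝ) ≤ 1/2 by norm_num) (show (0:ℝ) ≤ 1/2 by norm_num) (by norm_num)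
  have h2 := hfh 2 (by norm_num) _ hm
  rw [hfh t ht0 _ h1, hfn] at hc
  rw [← smul_add, smul_smul] at h2
  rw [← smul_add (1/2 : ℝ) p] at hc
  norm_num at h2 hc
  simp only [slope_def_field, zero_smul, add_zero, sub_zero]
  rw [le_div_iff₀ ht0]
  linarith
end

section
/- Let n ≥ 2 and 1 ≤ l < k ≤ n. Let σ_k(λ) = e_k(λ)/C(n,k) denote the normalized k-th elementary symmetric polynomial of λ ∈ ℝⁿ (e_k the k-th elementary symmetric polynomial, C(n,k) the binomial coefficient), and set f(λ) = (σ_k(λ)/σ_l(λ))^{1/(k−l)} wherever σ_l(λ) > 0 and σ_k(λ) > 0. Then: (a) lim_{R→+∞} f(1,…,1,1+R) = (k/l)^{1/(k−l)}; and (b) f satisfies condition (1.10): there exist ε₀ > 0, δ₀ > 0 and R₀ > 0 such that f(λ₁,…,λ_{n−1},λ_n+R) is defined and ≥ 1 + ε₀ for all R ≥ R₀ and all λ ∈ ℝⁿ with |λ − (1,…,1)| < δ₀. -/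
open scoped BigOperators
open Set

/-- The k-th elementary symmetric polynomial of p ∈ ℝⁿ. -/
def esymmFun (n k : ℕ) (p : Fin n → ℝ) : ℝ :=
  ∑ t ∈ Finset.univ.powersetCard k, ∏ i ∈ t, p i

/-- The normalized k-th elementary symmetric polynomial σ_k = e_k / C(n,k). -/
noncomputable def sigmaNorm (n k : ℕ) (p : Fin n → ℝ) : ℝ :=
  esymmFun n k p / (n.choose k : ℝ)

/-- The curvature quotient f = (σ_k/σ_l)^{1/(k−l)}. -/
noncomputable def fquot (n k l : ℕ) (p : Fin n → ℝ) : ℝ :=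
  (sigmaNorm n k p / sigmaNorm n l p) ^ ((1:ℝ) / ((k : ℝ) - (l : ℝ)))

theorem esymm_aux {n k : ℕ} (i : Fin n) (R : ℝ) :
    esymmFun n (k+1) (Function.update (fun _ => (1:ℝ)) i (1 + R))
      = (n.choose (k+1) : ℝ) + R * ((n-1).choose k : ℝ) := by
  classical
  have hn : 1 ≤ n := by have := i.2; omega
  unfold esymmFun
  have h1 : ∀ t ∈ (Finset.univ : Finset (Fin n)).powersetCard (k+1),
      ∏ j ∈ t, Function.update (fun _ => (1:ℝ)) i (1 + R) j
        = (1 + R) - R * (if i ∉ t then 1 else 0) := by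
    intro t _
    by_cases h : i ∈ t
    · rw [Finset.prod_update_of_mem h]; simp [h]
    · rw [Finset.prod_update_of_notMem h]; simp [h]
  rw [Finset.sum_congr rfl h1, Finset.sum_sub_distrib, ← Finset.mul_sum, Finset.sum_boole]
  have h2 : ((Finset.univ : Finset (Fin n)).powersetCard (k+1)).filter (fun t => i ∉ t)
      = (Finset.univ.erase i).powersetCard (k+1) := by
    ext t
    simp only [Finset.mem_filter, Finset.mem_powersetCard, Finset.subset_erase]
    tauto
  rw [h2, Finset.card_powersetCard, Finset.card_erase_of_mem (Finset.mem_univ i)]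
  simp only [Finset.sum_const, Finset.card_powersetCard, Finset.card_univ, Fintype.card_fin,
    nsmul_eq_mul]
  obtain ⟨m, rfl⟩ : ∃ m, n = m + 1 := ⟨n - 1, by omega⟩
  rw [Nat.add_sub_cancel, Nat.choose_succ_succ m k]
  push_cast
  ring

theorem sigma_aux {n k : ℕ} (hk : 1 ≤ k) (hkn : k ≤ n) (i : Fin n) (R : ℝ) :
    sigmaNorm n k (Function.update (fun _ => (1:ℝ)) i (1 + R)) = 1 + R * (k / n) := by
  obtain ⟨k, rfl⟩ : ∃ m, k = m + 1 := ⟨k - 1, by omega⟩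
  obtain ⟨m, rfl⟩ : ∃ m, n = m + 1 := ⟨n - 1, by omega⟩
  unfold sigmaNorm
  rw [esymm_aux, Nat.add_sub_cancel]
  have h0 : (((m+1).choose (k+1) : ℕ) : ℝ) ≠ 0 := by
    have := Nat.choose_pos hkn
    positivity
  have h := Nat.add_one_mul_choose_eq m k
  have h' : ((m:ℝ)+1) * (m.choose k : ℝ) = ((m+1).choose (k+1) : ℝ) * (k+1) := by
    exact_mod_cast h
  have hm : (m:ℝ)+1 ≠ 0 := by positivity
  push_cast
  field_simp
  linear_combination R * h'

theorem esymm_scale {n k : ℕ} (a : ℝ) (q : Fin n → ℝ) :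
    esymmFun n k (fun j => a * q j) = a ^ k * esymmFun n k q := by
  unfold esymmFun
  rw [Finset.mul_sum]
  refine Finset.sum_congr rfl fun t ht => ?_
  rw [Finset.prod_mul_distrib, Finset.prod_const, (Finset.mem_powersetCard.1 ht).2]

theorem sigma_mono {n k : ℕ} {p q : Fin n → ℝ} (h0 : ∀ i, 0 ≤ p i) (h : ∀ i, p i ≤ q i) :
    sigmaNorm n k p ≤ sigmaNorm n k q := by
  unfold sigmaNorm esymmFun
  gcongr with t ht j hj
  · intro j _; exact h0 j
  · exact h j

theorem sigma_scale {n k : ℕ} (a : ℝ) (q : Fin n → ℝ) :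
    sigmaNorm n k (fun j => a * q j) = a ^ k * sigmaNorm n k q := by
  unfold sigmaNorm
  rw [esymm_scale, mul_div_assoc]

theorem ratio_tendsto {n k l : ℕ} (hn : 2 ≤ n) (hl : 1 ≤ l) :
    Filter.Tendsto (fun R : ℝ => (1 + R * ((k:ℝ) / n)) / (1 + R * ((l:ℝ) / n))) Filter.atTop
      (nhds ((k:ℝ) / l)) := by
  have hn' : (0:ℝ) < n := by positivity
  have hl' : (0:ℝ) < l := by positivity
  have h1 : Filter.Tendsto (fun R : ℝ => (R⁻¹ + (k:ℝ) / n) / (R⁻¹ + (l:ℝ) / n)) Filter.atTop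
      (nhds ((0 + (k:ℝ) / n) / (0 + (l:ℝ)/n))) := by
    refine Filter.Tendsto.div (tendsto_inv_atTop_zero.add_const _)
      (tendsto_inv_atTop_zero.add_const _) ?_
    positivity
  have h2 : (0 + (k:ℝ) / n) / (0 + (l:ℝ)/n) = (k:ℝ)/l := by
    field_simp
    simp
  rw [h2] at h1
  refine h1.congr' ?_
  filter_upwards [Filter.eventually_gt_atTop (0:ℝ)] with R hR
  field_simp

theorem stmt_13 {n k l : ℕ} (hn : 2 ≤ n) (hl : 1 ≤ l) (hlk : l < k) (hkn : k ≤ n) :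
    Filter.Tendsto
      (fun R : ℝ =>
        fquot n k l (Function.update (fun _ => (1:ℝ)) (⟨n - 1, by omega⟩ : Fin n) (1 + R)))
      Filter.atTop
      (nhds (((k : ℝ) / (l : ℝ)) ^ ((1:ℝ) / ((k : ℝ) - (l : ℝ))))) ∧
    (∃ ε₀ > (0:ℝ), ∃ δ₀ > (0:ℝ), ∃ R₀ > (0:ℝ), ∀ R ≥ R₀, ∀ p : Fin n → ℝ,
      Real.sqrt (∑ i, (p i - 1) ^ 2) < δ₀ →
      ∀ i : Fin n,
        0 < sigmaNorm n l (Function.update p i (p i + R)) ∧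
        0 < sigmaNorm n k (Function.update p i (p i + R)) ∧
        1 + ε₀ ≤ fquot n k l (Function.update p i (p i + R))) := by
  have hl' : (0:ℝ) < l := by positivity
  have hlk' : (l:ℝ) < k := by exact_mod_cast hlk
  have hk' : (0:ℝ) < k := hl'.trans hlk'
  have hlim := ratio_tendsto (k := k) hn hl
  constructor
  · have := hlim.rpow_const (p := (1:ℝ) / ((k : ℝ) - (l : ℝ))) (Or.inl (by positivity))
    refine this.congr fun R => ?_
    unfold fquot
    rw [sigma_aux (by omega) hkn, sigma_aux hl (by omega)]
  · have h1 : 1 < (k:ℝ) / l := by rwa [one_lt_div hl']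
    obtain ⟨c, hc1, hc2⟩ := exists_between h1
    obtain ⟨d, hd1, hd2⟩ := exists_between hc1
    have hev := hlim.eventually (lt_mem_nhds hc2)
    obtain ⟨R₁, hR₁⟩ := Filter.eventually_atTop.1 hev
    have hcont : Filter.Tendsto (fun δ : ℝ => (1 - δ)^k / (1+δ)^l * c) (nhds 0)
        (nhds ((1 - 0)^k / (1+0)^l * c)) := by
      apply ContinuousAt.tendsto
      have : (1 + (0:ℝ))^l ≠ 0 := by simp
      fun_prop (disch := assumption)
    have hcont' := hcont.eventually (lt_mem_nhds (show d < _ by simpa using hd2))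
    obtain ⟨r, hr, hball⟩ := Metric.eventually_nhds_iff.1 hcont'
    set δ := min (r/2) (1/2) with hδ
    have hδ0 : 0 < δ := by positivity
    have hδ1 : δ ≤ 1/2 := min_le_right _ _
    have hδr : δ < r := lt_of_le_of_lt (min_le_left _ _) (by linarith)
    have hd : d < (1 - δ)^k / (1+δ)^l * c := hball (by
      rw [Real.dist_eq, sub_zero, abs_of_pos hδ0]; exact hδr)
    have hexp : 0 < (1:ℝ) / ((k : ℝ) - (l : ℝ)) := by
      have : 0 < (k:ℝ) - l := by linarith
      positivity
    refine ⟨d ^ ((1:ℝ) / ((k : ℝ) - (l : ℝ))) - 1,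
      sub_pos.2 (Real.one_lt_rpow hd1 hexp), δ, hδ0, max R₁ 1, by positivity, ?_⟩
    intro R hR p hp i
    have hRR : R₁ ≤ R := (le_max_left _ _).trans hR
    have hR1 : 1 ≤ R := (le_max_right _ _).trans hR
    have hpj : ∀ j, |p j - 1| < δ := by
      intro j
      refine lt_of_le_of_lt ?_ hp
      rw [← Real.sqrt_sq_eq_abs]
      apply Real.sqrt_le_sqrt
      exact Finset.single_le_sum (f := fun j => (p j - 1)^2) (fun _ _ => sq_nonneg _)
        (Finset.mem_univ j)
    set q := Function.update p i (p i + R) with hq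
    set q0 := Function.update (fun _ => (1:ℝ)) i (1 + R) with hq0
    have hlow : ∀ j, (1 - δ) * q0 j ≤ q j := by
      intro j
      have := abs_lt.1 (hpj j)
      by_cases h : j = i
      · subst h
        simp only [hq, hq0, Function.update_self]
        nlinarith
      · simp only [hq, hq0, Function.update_of_ne h]
        linarith
    have hup : ∀ j, q j ≤ (1 + δ) * q0 j := by
      intro j
      have := abs_lt.1 (hpj j)
      by_cases h : j = i
      · subst h
        simp only [hq, hq0, Function.update_self]
        nlinarith
      · simp only [hq, hq0, Function.update_of_ne h]
        linarith
    have hq00 : ∀ j, 0 ≤ (1 - δ) * q0 j := by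
      intro j
      apply mul_nonneg (by linarith)
      by_cases h : j = i
      · subst h
        simp only [hq0, Function.update_self]
        linarith
      · simp only [hq0, Function.update_of_ne h]
        norm_num
    have hS : ∀ m : ℕ, (1 - δ)^m * sigmaNorm n m q0 ≤ sigmaNorm n m q := fun m => by
      rw [← sigma_scale]; exact sigma_mono hq00 hlow
    have hU : sigmaNorm n l q ≤ (1 + δ)^l * sigmaNorm n l q0 := by
      rw [← sigma_scale]; exact sigma_mono (fun j => (hq00 j).trans (hlow j)) hup
    have hk0 : sigmaNorm n k q0 = 1 + R * (k / n) := sigma_aux (by omega) hkn i R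
    have hl0 : sigmaNorm n l q0 = 1 + R * (l / n) := sigma_aux hl (by omega) i R
    have hδ2 : 0 < 1 - δ := by linarith
    have hk0p : 0 < sigmaNorm n k q0 := by rw [hk0]; positivity
    have hl0p : 0 < sigmaNorm n l q0 := by rw [hl0]; positivity
    have hkp : 0 < sigmaNorm n k q := lt_of_lt_of_le (by positivity) (hS k)
    have hlp : 0 < sigmaNorm n l q := lt_of_lt_of_le (by positivity) (hS l)
    refine ⟨hlp, hkp, ?_⟩
    have hc := hR₁ R hRR
    rw [← hk0, ← hl0] at hc
    have hfin : d ≤ sigmaNorm n k q / sigmaNorm n l q := by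
      calc d ≤ (1 - δ)^k / (1+δ)^l * c := hd.le
        _ ≤ (1 - δ)^k / (1+δ)^l * (sigmaNorm n k q0 / sigmaNorm n l q0) := by gcongr
        _ = ((1 - δ)^k * sigmaNorm n k q0) / ((1+δ)^l * sigmaNorm n l q0) := by
          rw [div_mul_div_comm]
        _ ≤ _ := div_le_div₀ hkp.le (hS k) hlp hU
    rw [add_sub_cancel]
    exact Real.rpow_le_rpow (by linarith) hfin hexp.le
end

section
/- Let a ∈ (0,1) satisfy a² > 1/8. Then γ(y) = 2y³ − 2ay² − 2y + 3a > 0 for every y ∈ [a,1]; equivalently, the minimum value 7a/3 − (4/27)a³ − (4/27)(a²+3)^{3/2} of γ over [a,1] is strictly positive. -/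
open scoped BigOperators
open Set

/-- if a² > 1/8 then γ(y) = 2y³ − 2ay² − 2y + 3a > 0 on [a,1], and the
minimum value of γ on [a,1] is strictly positive. -/
theorem stmt_17 (a : ℝ) (ha : a ∈ Set.Ioo (0:ℝ) 1) (ha8 : 1 / 8 < a ^ 2) :
    (∀ y ∈ Set.Icc a 1, 0 < 2 * y ^ 3 - 2 * a * y ^ 2 - 2 * y + 3 * a) ∧
    0 < 7 * a / 3 - (4 / 27) * a ^ 3 - (4 / 27) * (a ^ 2 + 3) ^ ((3:ℝ) / 2) := by
  obtain ⟨h0, h1⟩ := ha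
  obtain ⟨s, hs0, hs2⟩ : ∃ s : ℝ, 0 < s ∧ s ^ 2 = a ^ 2 + 3 :=
    ⟨Real.sqrt (a ^ 2 + 3), by positivity, Real.sq_sqrt (by positivity)⟩
  have hpow : (a ^ 2 + 3) ^ ((3:ℝ) / 2) = s ^ 3 := by
    rw [← hs2, ← Real.rpow_natCast s 2, ← Real.rpow_mul hs0.le, ← Real.rpow_natCast s 3]
    norm_num
  have ha2 : a ^ 2 < 1 := by nlinarith
  have hpos : 0 < 63 * a - 4 * a ^ 3 := by
    have : 0 < a * (63 - 4 * a ^ 2) := mul_pos h0 (by linarith)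
    nlinarith
  have hlt : 4 * s ^ 3 < 63 * a - 4 * a ^ 3 := by
    apply lt_of_pow_lt_pow_left₀ 2 hpos.le
    have e : (4 * s ^ 3) ^ 2 = 16 * (a ^ 2 + 3) ^ 3 := by rw [← hs2]; ring
    rw [e]
    have : 0 < (8 * a ^ 2 - 1) * (16 - 3 * a ^ 2) := mul_pos (by linarith) (by linarith)
    nlinarith
  have hmin : 0 < 7 * a / 3 - (4 / 27) * a ^ 3 - (4 / 27) * s ^ 3 := by linarith
  refine ⟨?_, by rw [hpow]; exact hmin⟩
  rintro y ⟨hy1, hy2⟩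
  have key : 2 * y ^ 3 - 2 * a * y ^ 2 - 2 * y + 3 * a
      = 2 * (y - (a + s) / 3) ^ 2 * (y - a + 2 * ((a + s) / 3))
        + (7 * a / 3 - (4 / 27) * a ^ 3 - (4 / 27) * s ^ 3) := by
    linear_combination (2 * y / 3 - 2 * a / 9) * hs2
  rw [key]
  have : 0 ≤ y - a + 2 * ((a + s) / 3) := by linarith
  positivity
end
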